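/- Let α ∈ (0, 1/10]. (i) For all continuously differentiable f, g on (0,∞)×(0,π/2) with ‖f‖_{C¹}, ‖g‖_{C¹} < ∞: ‖fg‖_{C¹} ≤ ‖f‖_{C¹} ‖g‖_{C¹}. (ii) There is an absolute constant C such that for every continuously differentiable p with ‖((1+R)/R) p‖_{W^{1,∞}} < ∞: ‖p‖_{C¹} ≤ C ‖((1+R)/R) p‖_{W^{1,∞}}. -/

import Mathlib

open Real MeasureTheory Set

noncomputable section

namespace Paper

/-- The domain `(0,∞) × (0,π/2)` in the `(R,β)` variables. -/
def Qdom : Set (ℝ × ℝ) := Set.Ioi (0:ℝ) ×ˢ Set.Ioo (0:ℝ) (Real.pi/2)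

/-- Inner product `⟨f,g⟩ = ∫₀^∞ ∫₀^{π/2} f g dβ dR`. -/
def inner2 (f g : ℝ → ℝ → ℝ) : ℝ :=
  ∫ R in Set.Ioi (0:ℝ), ∫ β in Set.Ioo (0:ℝ) (Real.pi/2), f R β * g R β

/-- The `L²` norm `‖f‖₂`. -/
def norm2 (f : ℝ → ℝ → ℝ) : ℝ := Real.sqrt (inner2 f f)

/-- `‖h‖_{L²(R)}` for functions of `R` alone. -/
def normR (h : ℝ → ℝ) : ℝ := Real.sqrt (∫ R in Set.Ioi (0:ℝ), (h R)^2)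

/-- `D_R = R ∂_R`. -/
def DR (f : ℝ → ℝ → ℝ) : ℝ → ℝ → ℝ := fun R β => R * deriv (fun r => f r β) R

/-- `D_R` for functions of `R` alone. -/
def DR1 (h : ℝ → ℝ) : ℝ → ℝ := fun R => R * deriv h R

/-- `D_β = sin(2β) ∂_β`. -/
def Dbeta (f : ℝ → ℝ → ℝ) : ℝ → ℝ → ℝ :=
  fun R β => Real.sin (2*β) * deriv (fun b => f R b) β

/-- `L₁₂(Ω)(R) = ∫_R^∞ ∫₀^{π/2} Ω(s,β) sin(2β) s⁻¹ dβ ds`. -/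
def L12 (Ω : ℝ → ℝ → ℝ) (R : ℝ) : ℝ :=
  ∫ s in Set.Ioi R, ∫ β in Set.Ioo (0:ℝ) (Real.pi/2), Ω s β * Real.sin (2*β) / s

/-- `L̃₁₂(Ω)(R) = L₁₂(Ω)(R) − L₁₂(Ω)(0)`. -/
def tL12 (Ω : ℝ → ℝ → ℝ) (R : ℝ) : ℝ := L12 Ω R - L12 Ω 0

/-- Compact support contained in the open domain `(0,∞)×(0,π/2)`. -/
def suppIn (f : ℝ → ℝ → ℝ) : Prop :=
  ∃ K : Set (ℝ × ℝ), IsCompact K ∧ K ⊆ Qdom ∧ ∀ x y : ℝ, (x, y) ∉ K → f x y = 0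

/-- Integrability over the domain. -/
def Integrable2 (f : ℝ → ℝ → ℝ) : Prop :=
  MeasureTheory.IntegrableOn (Function.uncurry f) Qdom

/-- `Γ(β) = (cos β)^α`. -/
def Γf (α : ℝ) (β : ℝ) : ℝ := Real.cos β ^ α

/-- The normalizing constant `c = (2/π)∫₀^{π/2} Γ(β) sin(2β) dβ`. -/
def cst (α : ℝ) : ℝ :=
  (2/Real.pi) * ∫ β in Set.Ioo (0:ℝ) (Real.pi/2), Γf α β * Real.sin (2*β)

/-- The approximate profile `Ω̄`. -/
def Ωbar (α : ℝ) : ℝ → ℝ → ℝ := fun R β => (α / cst α) * Γf α β * (3*R/(1+R)^2)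

/-- The approximate profile `η̄`. -/
def ηbar (α : ℝ) : ℝ → ℝ → ℝ := fun R β => (α / cst α) * Γf α β * (6*R/(1+R)^3)

/-- The singular weight `φ₁ = (1+R)⁴R⁻⁴ sin(2β)^{-σ}`, `σ = 99/100`. -/
def phi1 : ℝ → ℝ → ℝ := fun R β => (1+R)^4 / R^4 * Real.sin (2*β) ^ (-(99/100 : ℝ))

/-- The singular weight `φ₂ = (1+R)⁴R⁻⁴ sin(2β)^{-γ}`, `γ = 1 + α/10`. -/
def phi2 (α : ℝ) : ℝ → ℝ → ℝ := fun R β => (1+R)^4 / R^4 * Real.sin (2*β) ^ (-(1 + α/10))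

/-- The singular weight `ψ₁ = (1+R)⁴R⁻⁴ (sin β cos β)^{-σ}`. -/
def psi1 : ℝ → ℝ → ℝ := fun R β =>
  (1+R)^4 / R^4 * (Real.sin β * Real.cos β) ^ (-(99/100 : ℝ))

/-- The singular weight `ψ₂ = (1+R)⁴R⁻⁴ (sin β)^{-σ}(cos β)^{-γ}`. -/
def psi2 (α : ℝ) : ℝ → ℝ → ℝ := fun R β =>
  (1+R)^4 / R^4 * Real.sin β ^ (-(99/100 : ℝ)) * Real.cos β ^ (-(1 + α/10))

/-- `c_ω = −(2/(πα)) L₁₂(Ω)(0)`. -/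
def cω (α : ℝ) (Ω : ℝ → ℝ → ℝ) : ℝ := -(2/(Real.pi*α)) * L12 Ω 0

/-- The linearized operator `L₁`. -/
def opL1 (α : ℝ) (Ω η : ℝ → ℝ → ℝ) : ℝ → ℝ → ℝ := fun R β =>
  - DR Ω R β - (3/(1+R)) * Dbeta Ω R β - Ω R β + η R β
  + cω α Ω * (Ωbar α R β - DR (Ωbar α) R β)

/-- The linearized operator `L₂`. -/
def opL2 (α : ℝ) (Ω η : ℝ → ℝ → ℝ) : ℝ → ℝ → ℝ := fun R β =>
  - DR η R β - (3/(1+R)) * Dbeta η R β + (-2 + 3/(1+R)) * η R β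
  + (2/(Real.pi*α)) * tL12 Ω R * ηbar α R β
  + cω α Ω * (ηbar α R β - DR (ηbar α) R β)

/-- `ξ̄` in Cartesian variables. -/
def ξbarC (α : ℝ) (x y : ℝ) : ℝ :=
  -(18*α^2 / cst α) * ∫ z in Set.Ioo (0:ℝ) x,
      (y/(y^2+z^2)) * (z ^ α * (z^2+y^2) ^ (α/2) / (1 + (z^2+y^2) ^ (α/2))^4)

/-- `ξ̄` in the `(R,β)` variables, via `x = R^{1/α} cos β`, `y = R^{1/α} sin β`. -/
def ξbar (α : ℝ) : ℝ → ℝ → ℝ := fun R β =>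
  ξbarC α (R ^ (1/α) * Real.cos β) (R ^ (1/α) * Real.sin β)

/-- The linearized operator `L₃`. -/
def opL3 (α : ℝ) (Ω ξ : ℝ → ℝ → ℝ) : ℝ → ℝ → ℝ := fun R β =>
  - DR ξ R β - (3/(1+R)) * Dbeta ξ R β + (-2 - 3/(1+R)) * ξ R β
  - (2/(Real.pi*α)) * tL12 Ω R * ξbar α R β
  + cω α Ω * (3 * ξbar α R β - DR (ξbar α) R β)

/-- Weighted Sobolev norm `H^m` with radial weight `w1` and angular weight `w2`:
`‖f‖ = Σ_{0≤k≤m} ‖(D_R^k f)√w1‖₂ + Σ_{i+j≤m−1} ‖(D_R^i D_β^{j+1} f)√w2‖₂`. -/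
def Hnorm (m : ℕ) (w1 w2 : ℝ → ℝ → ℝ) (f : ℝ → ℝ → ℝ) : ℝ :=
  (∑ k ∈ Finset.range (m+1),
    norm2 (fun R β => DR^[k] f R β * Real.sqrt (w1 R β)))
  + ∑ p ∈ (Finset.range (m+1) ×ˢ Finset.range (m+1)).filter
      (fun p => p.1 + p.2 + 1 ≤ m),
      norm2 (fun R β => DR^[p.1] (Dbeta^[p.2+1] f) R β * Real.sqrt (w2 R β))

/-- Sup of `|f|` over the domain `(0,∞)×(0,π/2)`. -/
def supDom (f : ℝ → ℝ → ℝ) : ℝ :=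
  ⨆ (R : Set.Ioi (0:ℝ)) (β : Set.Ioo (0:ℝ) (Real.pi/2)), |f R.1 β.1|

/-- The weighted `C¹` norm. -/
def C1norm (α : ℝ) (f : ℝ → ℝ → ℝ) : ℝ :=
  supDom f + supDom (fun R β => (1+R)/R * DR f R β)
  + supDom (fun R β =>
      (1 + (R * Real.sin (2*β) ^ α) ^ (-(1/40 : ℝ))) * Dbeta f R β)

/-- Boundedness of `f` on the domain. -/
def BddDom (f : ℝ → ℝ → ℝ) : Prop :=
  ∃ M : ℝ, ∀ R ∈ Set.Ioi (0:ℝ), ∀ β ∈ Set.Ioo (0:ℝ) (Real.pi/2), |f R β| ≤ M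

/-- Finiteness of the weighted `C¹` norm. -/
def C1Fin (α : ℝ) (f : ℝ → ℝ → ℝ) : Prop :=
  BddDom f ∧ BddDom (fun R β => (1+R)/R * DR f R β) ∧
  BddDom (fun R β => (1 + (R * Real.sin (2*β) ^ α) ^ (-(1/40 : ℝ))) * Dbeta f R β)

/-- The weighted `W^{l,∞}` norm. -/
def Wnorm (α : ℝ) (l : ℕ) (f : ℝ → ℝ → ℝ) : ℝ :=
  (∑ k ∈ Finset.range (l+1), supDom (DR^[k] f))
  + ∑ p ∈ (Finset.range (l+1) ×ˢ Finset.range (l+1)).filter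
      (fun p => p.1 + p.2 ≤ l ∧ 1 ≤ p.2),
      supDom (fun R β => Real.sin (2*β) ^ (-(α/5)) *
        DR^[p.1] (fun R' β' => Dbeta^[p.2] f R' β' / (α/10 + Real.sin (2*β'))) R β)

/-- Finiteness of the `W^{l,∞}` norm. -/
def WFin (α : ℝ) (l : ℕ) (f : ℝ → ℝ → ℝ) : Prop :=
  (∀ k ≤ l, BddDom (DR^[k] f)) ∧
  ∀ k j : ℕ, k + j ≤ l → 1 ≤ j →
    BddDom (fun R β => Real.sin (2*β) ^ (-(α/5)) *
      DR^[k] (fun R' β' => Dbeta^[j] f R' β' / (α/10 + Real.sin (2*β'))) R β)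

/-- `I(f)(x,y) = ∫₀ˣ f(z,y)/z dz`. -/
def Ifun (f : ℝ → ℝ → ℝ) : ℝ → ℝ → ℝ := fun x y => ∫ z in Set.Ioo (0:ℝ) x, f z y / z

/-- `D_S g = (1/α)(z ∂_z g + y ∂_y g)` in Cartesian variables. -/
def DScart (α : ℝ) (g : ℝ → ℝ → ℝ) : ℝ → ℝ → ℝ := fun a b =>
  (1/α) * (a * deriv (fun a' => g a' b) a + b * deriv (fun b' => g a b') b)

/-- `D_τ g = 2y ∂_y g − 2α (y²/(y²+z²)) D_S g` in Cartesian variables. -/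
def DTcart (α : ℝ) (g : ℝ → ℝ → ℝ) : ℝ → ℝ → ℝ := fun a b =>
  2*b * deriv (fun b' => g a b') b - 2*α*(b^2/(b^2+a^2)) * DScart α g a b

/-!
Both `D_R` and `D_β` are derivations, so each weighted first-order term of `f g` is bounded by
`‖D f‖ ‖g‖ + ‖f‖ ‖D g‖` with the weight placed on the derivative, and summing the three terms leaves
only nonnegative cross terms of `‖f‖ ‖g‖` unused.

For the second estimate put `q = (1 + R) / R * p`. The weight commutes with `D_β`, while commuting
it with `D_R` costs `q / (1 + R)`, which is bounded by `q`. The angular term then reduces to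
comparing weights: the factor `R / (1 + R)` absorbs the singularity of `R ^ (-1/40)` at `R = 0`, and
`sin (2β) ^ (-α/40) ≤ sin (2β) ^ (-α/5)` because `0 < sin (2β) ≤ 1`.
-/

section Bounds

/-- The bound `|f| ≤ M` on the domain `(0,∞) × (0,π/2)`. Unlike `supDom f ≤ M`, it entails that `f`
is bounded: a real supremum of an unbounded family is `0`. -/
def IsBoundDom (f : ℝ → ℝ → ℝ) (M : ℝ) : Prop :=
  ∀ ⦃R β : ℝ⦄, 0 < R → β ∈ Ioo 0 (π / 2) → |f R β| ≤ M

variable {f g : ℝ → ℝ → ℝ} {M N : ℝ}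

lemma IsBoundDom.bddDom (hf : IsBoundDom f M) : BddDom f :=
  ⟨M, fun _ hR _ hβ => hf hR hβ⟩

lemma IsBoundDom.nonneg (hf : IsBoundDom f M) : 0 ≤ M :=
  (abs_nonneg _).trans (hf one_pos (β := π / 4) ⟨by positivity, by linarith [pi_pos]⟩)

lemma IsBoundDom.supDom_le (hf : IsBoundDom f M) : supDom f ≤ M :=
  Real.iSup_le (fun R => Real.iSup_le (fun β => hf R.2 β.2) hf.nonneg) hf.nonneg

lemma IsBoundDom.add (hf : IsBoundDom f M) (hg : IsBoundDom g N) :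
    IsBoundDom (fun R β => f R β + g R β) (M + N) :=
  fun _ _ hR hβ => (abs_add_le _ _).trans (add_le_add (hf hR hβ) (hg hR hβ))

lemma IsBoundDom.mul (hf : IsBoundDom f M) (hg : IsBoundDom g N) :
    IsBoundDom (fun R β => f R β * g R β) (M * N) := fun R β hR hβ => by
  rw [abs_mul]
  exact mul_le_mul (hf hR hβ) (hg hR hβ) (abs_nonneg _) hf.nonneg

lemma IsBoundDom.congr (hf : IsBoundDom f M)
    (h : ∀ ⦃R β : ℝ⦄, 0 < R → β ∈ Ioo 0 (π / 2) → g R β = f R β) : IsBoundDom g M :=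
  fun _ _ hR hβ => h hR hβ ▸ hf hR hβ

lemma BddDom.isBoundDom_supDom (hf : BddDom f) : IsBoundDom f (supDom f) := by
  obtain ⟨M, hM⟩ := hf
  intro R β hR hβ
  have hM₀ : 0 ≤ M := (abs_nonneg _).trans (hM R hR β hβ)
  calc |f R β| ≤ ⨆ b : Ioo (0 : ℝ) (π / 2), |f R b| :=
        le_ciSup (f := fun b : Ioo (0 : ℝ) (π / 2) => |f R b|)
          ⟨M, by rintro _ ⟨b, rfl⟩; exact hM R hR b b.2⟩ ⟨β, hβ⟩
    _ ≤ supDom f :=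
        le_ciSup (f := fun r : Ioi (0 : ℝ) => ⨆ b : Ioo (0 : ℝ) (π / 2), |f r b|)
          ⟨M, by rintro _ ⟨r, rfl⟩; exact Real.iSup_le (fun b => hM r r.2 b b.2) hM₀⟩ ⟨R, hR⟩

lemma supDom_nonneg (f : ℝ → ℝ → ℝ) : 0 ≤ supDom f :=
  Real.iSup_nonneg fun _ => Real.iSup_nonneg fun _ => abs_nonneg _

end Bounds

section Weights

/-- Multiplication by the radial weight `(1 + R) / R`, which occurs in the `C¹` norm and in the
estimate by the `W^{1,∞}` norm. -/
def radialWeighted (f : ℝ → ℝ → ℝ) : ℝ → ℝ → ℝ := fun R β => (1 + R) / R * f R β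

/-- Multiplication by the weight `1 + (R sin(2β)^α)^{-1/40}` that the `C¹` norm puts on `D_β f`. -/
def angularWeighted (α : ℝ) (f : ℝ → ℝ → ℝ) : ℝ → ℝ → ℝ :=
  fun R β => (1 + (R * sin (2 * β) ^ α) ^ (-(1 / 40 : ℝ))) * f R β

/-- Multiplication by the weight `sin(2β)^{-α/5} / (α/10 + sin(2β))` that the `W^{1,∞}` norm puts on
`D_β f`. -/
def singularWeighted (α : ℝ) (f : ℝ → ℝ → ℝ) : ℝ → ℝ → ℝ :=
  fun R β => sin (2 * β) ^ (-(α / 5)) * (f R β / (α / 10 + sin (2 * β)))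

lemma sin_two_mul_pos {β : ℝ} (hβ : β ∈ Ioo 0 (π / 2)) : 0 < sin (2 * β) :=
  sin_pos_of_pos_of_lt_pi (by linarith [hβ.1]) (by linarith [hβ.2])

lemma rpow_neg_mul_div_one_add_le_one {R a : ℝ} (hR : 0 < R) (ha₀ : 0 ≤ a) (ha₁ : a ≤ 1) :
    R ^ (-a) * (R / (1 + R)) ≤ 1 := by
  have h : R ^ (-a) * R = R ^ (1 - a) := by
    rw [← rpow_add_one hR.ne', neg_add_eq_sub]
  rw [← mul_div_assoc, h, div_le_one (by positivity)]
  calc R ^ (1 - a) ≤ (1 + R) ^ (1 - a) := by gcongr; linarith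
    _ ≤ 1 + R := rpow_le_self_of_one_le (by linarith) (by linarith)

lemma one_add_rpow_neg_mul_div_one_add_le {R s α a b : ℝ} (hR : 0 < R) (hs₀ : 0 < s) (hs₁ : s ≤ 1)
    (ha₀ : 0 ≤ a) (ha₁ : a ≤ 1) (hb : 0 ≤ b) (hab : α * a ≤ b) :
    (1 + (R * s ^ α) ^ (-a)) * (R / (1 + R)) ≤ 2 * s ^ (-b) := by
  have h_one : R / (1 + R) ≤ s ^ (-b) :=
    (div_le_one_of_le₀ (by linarith) (by positivity)).trans
      (one_le_rpow_of_pos_of_le_one_of_nonpos hs₀ hs₁ (by linarith))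
  have h_sing : (R * s ^ α) ^ (-a) * (R / (1 + R)) ≤ s ^ (-b) :=
    calc (R * s ^ α) ^ (-a) * (R / (1 + R))
        = R ^ (-a) * (R / (1 + R)) * s ^ (-(α * a)) := by
          rw [mul_rpow hR.le (by positivity), ← rpow_mul hs₀.le, mul_neg]; ring
      _ ≤ 1 * s ^ (-b) := by
          gcongr ?_ * ?_
          · exact rpow_neg_mul_div_one_add_le_one hR ha₀ ha₁
          · exact rpow_le_rpow_of_exponent_ge hs₀ hs₁ (by linarith)
      _ = s ^ (-b) := one_mul _
  linarith

lemma abs_angularWeighted_le {α R β : ℝ} (f : ℝ → ℝ → ℝ) (hα : 0 ≤ α) (hR : 0 < R)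
    (hβ : β ∈ Ioo 0 (π / 2)) :
    |angularWeighted α f R β| ≤
      (2 + α / 5) * |singularWeighted α (radialWeighted f) R β| := by
  have hs₀ := sin_two_mul_pos hβ
  have hs₁ := sin_le_one (2 * β)
  simp only [angularWeighted, singularWeighted, radialWeighted]
  set s := sin (2 * β)
  set w := 1 + (R * s ^ α) ^ (-(1 / 40 : ℝ))
  have hw : 0 < w := by positivity
  have hweight : w * (R / (1 + R)) ≤ 2 * s ^ (-(α / 5)) :=
    one_add_rpow_neg_mul_div_one_add_le hR hs₀ hs₁ (by norm_num) (by norm_num) (by positivity)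
      (by linarith)
  have hfactor : w * f R β =
      w * (R / (1 + R)) * (α / 10 + s) * ((1 + R) / R * f R β / (α / 10 + s)) := by
    field_simp
  calc |w * f R β|
      = w * (R / (1 + R)) * (α / 10 + s) * |(1 + R) / R * f R β / (α / 10 + s)| := by
        rw [hfactor, abs_mul, abs_of_pos (by positivity)]
    _ ≤ 2 * s ^ (-(α / 5)) * (α / 10 + 1) * |(1 + R) / R * f R β / (α / 10 + s)| := by gcongr
    _ = (2 + α / 5) * |s ^ (-(α / 5)) * ((1 + R) / R * f R β / (α / 10 + s))| := by
        rw [abs_mul, abs_of_pos (show 0 < s ^ (-(α / 5)) by positivity)]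
        ring

lemma IsBoundDom.of_radialWeighted {f : ℝ → ℝ → ℝ} {M : ℝ} (hf : IsBoundDom (radialWeighted f) M) :
    IsBoundDom f M := fun R β hR hβ => by
  have hone : 1 ≤ |(1 + R) / R| := by
    rw [abs_of_pos (by positivity), one_le_div hR]
    linarith
  calc |f R β| ≤ |(1 + R) / R| * |f R β| := le_mul_of_one_le_left (abs_nonneg _) hone
    _ = |radialWeighted f R β| := (abs_mul _ _).symm
    _ ≤ M := hf hR hβ

end Weights

section Derivations

/-- Existence of both partial derivatives at every point of the domain, the regularity under which
`D_R f` and `D_β f` carry no junk values there. -/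
def PartiallyDifferentiable (f : ℝ → ℝ → ℝ) : Prop :=
  ∀ ⦃R β : ℝ⦄, 0 < R → β ∈ Ioo 0 (π / 2) →
    DifferentiableAt ℝ (fun r => f r β) R ∧ DifferentiableAt ℝ (fun b => f R b) β

lemma partiallyDifferentiable_of_differentiableOn {f : ℝ → ℝ → ℝ}
    (hf : DifferentiableOn ℝ (Function.uncurry f) Qdom) : PartiallyDifferentiable f := by
  intro R β hR hβ
  have h : DifferentiableAt ℝ (Function.uncurry f) (R, β) :=
    hf.differentiableAt ((isOpen_Ioi.prod isOpen_Ioo).mem_nhds ⟨hR, hβ⟩)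
  exact ⟨h.comp R (f := fun r => (r, β)) (by fun_prop),
    h.comp β (f := fun b => (R, b)) (by fun_prop)⟩

variable {f g : ℝ → ℝ → ℝ} {R β : ℝ}

lemma DR_mul (hf : DifferentiableAt ℝ (fun r => f r β) R)
    (hg : DifferentiableAt ℝ (fun r => g r β) R) :
    DR (fun R β => f R β * g R β) R β = DR f R β * g R β + f R β * DR g R β := by
  simp only [DR]
  rw [deriv_fun_mul hf hg]
  ring

lemma Dbeta_mul (hf : DifferentiableAt ℝ (fun b => f R b) β)
    (hg : DifferentiableAt ℝ (fun b => g R b) β) :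
    Dbeta (fun R β => f R β * g R β) R β = Dbeta f R β * g R β + f R β * Dbeta g R β := by
  simp only [Dbeta]
  rw [deriv_fun_mul hf hg]
  ring

lemma Dbeta_radialWeighted (f : ℝ → ℝ → ℝ) :
    Dbeta (radialWeighted f) = radialWeighted (Dbeta f) := by
  funext R β
  simp only [Dbeta, radialWeighted, deriv_const_mul_field]
  ring

lemma radialWeighted_DR_eq (hR : 0 < R) (hf : DifferentiableAt ℝ (fun r => f r β) R) :
    radialWeighted (DR f) R β =
      (1 + R)⁻¹ * radialWeighted f R β + DR (radialWeighted f) R β := by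
  have hweight : HasDerivAt (fun r : ℝ => (1 + r) / r) ((1 * R - (1 + R) * 1) / R ^ 2) R :=
    ((hasDerivAt_id R).const_add 1).div (hasDerivAt_id R) hR.ne'
  simp only [DR, radialWeighted]
  rw [(hweight.fun_mul hf.hasDerivAt).deriv]
  field_simp
  ring

lemma IsBoundDom.radialWeighted_DR {M N : ℝ} (hf : PartiallyDifferentiable f)
    (hM : IsBoundDom (radialWeighted f) M) (hN : IsBoundDom (DR (radialWeighted f)) N) :
    IsBoundDom (radialWeighted (DR f)) (M + N) := by
  have hinv : IsBoundDom (fun R _ => (1 + R)⁻¹) 1 := fun R β hR _ => by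
    rw [abs_of_pos (by positivity)]
    exact inv_le_one_of_one_le₀ (by linarith)
  have hsum : IsBoundDom
      (fun R β => (1 + R)⁻¹ * radialWeighted f R β + DR (radialWeighted f) R β) (M + N) := by
    simpa only [one_mul] using (hinv.mul hM).add hN
  exact hsum.congr fun R β hR hβ => radialWeighted_DR_eq hR (hf hR hβ).1

end Derivations

section Norms

variable {α : ℝ} {f g p : ℝ → ℝ → ℝ}

lemma C1Fin_and_C1norm_le {M₀ M₁ M₂ : ℝ} (h₀ : IsBoundDom f M₀)
    (h₁ : IsBoundDom (radialWeighted (DR f)) M₁)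
    (h₂ : IsBoundDom (angularWeighted α (Dbeta f)) M₂) :
    C1Fin α f ∧ C1norm α f ≤ M₀ + M₁ + M₂ :=
  ⟨⟨h₀.bddDom, h₁.bddDom, h₂.bddDom⟩,
    add_le_add (add_le_add h₀.supDom_le h₁.supDom_le) h₂.supDom_le⟩

lemma Wnorm_one (α : ℝ) (f : ℝ → ℝ → ℝ) :
    Wnorm α 1 f = supDom f + supDom (DR f) + supDom (singularWeighted α (Dbeta f)) := by
  have hidx : (Finset.range (1 + 1) ×ˢ Finset.range (1 + 1)).filter
      (fun p : ℕ × ℕ => p.1 + p.2 ≤ 1 ∧ 1 ≤ p.2) = {(0, 1)} := by decide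
  rw [Wnorm, hidx, Finset.sum_singleton, Finset.sum_range_succ, Finset.sum_range_one]
  rfl

theorem C1Fin_mul_and_C1norm_mul_le (hf : PartiallyDifferentiable f)
    (hg : PartiallyDifferentiable g) (hf_fin : C1Fin α f) (hg_fin : C1Fin α g) :
    C1Fin α (fun R β => f R β * g R β) ∧
      C1norm α (fun R β => f R β * g R β) ≤ C1norm α f * C1norm α g := by
  obtain ⟨f₀, f₁, f₂⟩ := hf_fin
  obtain ⟨g₀, g₁, g₂⟩ := hg_fin
  replace f₀ := f₀.isBoundDom_supDom
  replace g₀ := g₀.isBoundDom_supDom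
  replace f₁ : IsBoundDom (radialWeighted (DR f)) _ := f₁.isBoundDom_supDom
  replace g₁ : IsBoundDom (radialWeighted (DR g)) _ := g₁.isBoundDom_supDom
  replace f₂ : IsBoundDom (angularWeighted α (Dbeta f)) _ := f₂.isBoundDom_supDom
  replace g₂ : IsBoundDom (angularWeighted α (Dbeta g)) _ := g₂.isBoundDom_supDom
  have hradial := ((f₁.mul g₀).add (f₀.mul g₁)).congr
    (g := radialWeighted (DR fun R β => f R β * g R β)) fun R β hR hβ => by
      simp only [radialWeighted]
      rw [DR_mul (hf hR hβ).1 (hg hR hβ).1]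
      ring
  have hangular := ((f₂.mul g₀).add (f₀.mul g₂)).congr
    (g := angularWeighted α (Dbeta fun R β => f R β * g R β)) fun R β hR hβ => by
      simp only [angularWeighted]
      rw [Dbeta_mul (hf hR hβ).2 (hg hR hβ).2]
      ring
  refine (C1Fin_and_C1norm_le (f₀.mul g₀) hradial hangular).imp_right fun h => h.trans ?_
  have hcross := mul_nonneg (add_nonneg f₁.nonneg f₂.nonneg) (add_nonneg g₁.nonneg g₂.nonneg)
  unfold C1norm
  linarith

theorem C1Fin_and_C1norm_le_mul_Wnorm (hα : 0 ≤ α) (hp : PartiallyDifferentiable p)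
    (hW : WFin α 1 (radialWeighted p)) :
    C1Fin α p ∧ C1norm α p ≤ (2 + α / 5) * Wnorm α 1 (radialWeighted p) := by
  have h₀ : IsBoundDom (radialWeighted p) _ := (hW.1 0 zero_le_one).isBoundDom_supDom
  have h₁ : IsBoundDom (DR (radialWeighted p)) _ := (hW.1 1 le_rfl).isBoundDom_supDom
  have h₂ : IsBoundDom (singularWeighted α (Dbeta (radialWeighted p))) _ :=
    (hW.2 0 1 le_rfl le_rfl).isBoundDom_supDom
  have hangular : IsBoundDom (angularWeighted α (Dbeta p))
      ((2 + α / 5) * supDom (singularWeighted α (Dbeta (radialWeighted p)))) :=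
    fun R β hR hβ => (abs_angularWeighted_le (Dbeta p) hα hR hβ).trans <| by
      rw [← Dbeta_radialWeighted]
      exact mul_le_mul_of_nonneg_left (h₂ hR hβ) (by positivity)
  refine (C1Fin_and_C1norm_le h₀.of_radialWeighted (h₀.radialWeighted_DR hp h₁) hangular).imp_right
    fun h => h.trans ?_
  have hq := mul_nonneg hα (supDom_nonneg (radialWeighted p))
  have hDq := mul_nonneg (by linarith : 0 ≤ 1 + α / 5) (supDom_nonneg (DR (radialWeighted p)))
  simp only [Wnorm_one, Function.iterate_zero, Function.iterate_one, id_eq]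
  linarith

end Norms

theorem C1_product_and_W1infty_control_general :
    (∀ (α : ℝ) (f g : ℝ → ℝ → ℝ), PartiallyDifferentiable f → PartiallyDifferentiable g →
      C1Fin α f → C1Fin α g →
      C1Fin α (fun R β => f R β * g R β) ∧
        C1norm α (fun R β => f R β * g R β) ≤ C1norm α f * C1norm α g) ∧
    (∀ A : ℝ, ∃ C : ℝ, ∀ α : ℝ, 0 ≤ α → α ≤ A → ∀ p : ℝ → ℝ → ℝ, PartiallyDifferentiable p →
      WFin α 1 (fun R β => (1 + R) / R * p R β) →
      C1Fin α p ∧ C1norm α p ≤ C * Wnorm α 1 (fun R β => (1 + R) / R * p R β)) := by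
  refine ⟨fun α f g => C1Fin_mul_and_C1norm_mul_le, fun A => ⟨2 + A / 5, ?_⟩⟩
  intro α hα hαA p hp hW
  refine (C1Fin_and_C1norm_le_mul_Wnorm hα hp hW).imp_right fun h => h.trans ?_
  refine mul_le_mul_of_nonneg_right (by linarith) ?_
  rw [Wnorm_one]
  exact add_nonneg (add_nonneg (supDom_nonneg _) (supDom_nonneg _)) (supDom_nonneg _)

/-- product rule for the weighted `C¹` norm, and control of the
`C¹` norm by the weighted `W^{1,∞}` norm. -/
theorem C1_product_and_W1infty_control :
    (∀ α : ℝ, 0 < α → α ≤ 1/10 → ∀ f g : ℝ → ℝ → ℝ,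
      ContDiffOn ℝ 1 (Function.uncurry f) Qdom →
      ContDiffOn ℝ 1 (Function.uncurry g) Qdom →
      C1Fin α f → C1Fin α g →
      C1norm α (fun R β => f R β * g R β) ≤ C1norm α f * C1norm α g) ∧
    (∃ C : ℝ, ∀ α : ℝ, 0 < α → α ≤ 1/10 → ∀ p : ℝ → ℝ → ℝ,
      ContDiffOn ℝ 1 (Function.uncurry p) Qdom →
      WFin α 1 (fun R β => (1+R)/R * p R β) →
      C1norm α p ≤ C * Wnorm α 1 (fun R β => (1+R)/R * p R β)) := by
  have hdiff {f : ℝ → ℝ → ℝ} (hf : ContDiffOn ℝ 1 (Function.uncurry f) Qdom) :=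
    partiallyDifferentiable_of_differentiableOn (hf.differentiableOn one_ne_zero)
  obtain ⟨hmul, hW⟩ := C1_product_and_W1infty_control_general
  exact ⟨fun α _ _ f g hf hg hf_fin hg_fin => (hmul α f g (hdiff hf) (hdiff hg) hf_fin hg_fin).2,
    (hW (1 / 10)).imp fun C hC α hα hα' p hp hp_fin => (hC α hα.le hα' p (hdiff hp) hp_fin).2⟩

end Paper
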